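/- arXiv:1907.10468 — 3 statements merged into one kernel-verified Lean document; each statement's English description precedes it below -/
import Mathlib

section
/- Let ⟨R,C⟩ be a win-lose bimatrix game having a Nash equilibrium σ with U_i(σ) = 0 for some player i ∈ {1,2}. Then ⟨R,C⟩ has a pure Nash equilibrium. -/
open Finset

/-- `x` is a probability distribution on the finite type `α`. -/
def IsDist {α : Type*} [Fintype α] (x : α → ℝ) : Prop :=
  (∀ s, 0 ≤ x s) ∧ ∑ s, x s = 1

/-- Expected utility, in a bimatrix game, of the player whose utility matrix is `M`,
when the row player plays `x` and the column player plays `y`. -/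
noncomputable def pay {α : Type*} [Fintype α] (M : α → α → ℝ) (x y : α → ℝ) : ℝ :=
  ∑ s₁, ∑ s₂, x s₁ * y s₂ * M s₁ s₂

/-- `⟨x, y⟩` is a (mixed) Nash equilibrium of the bimatrix game `⟨R, C⟩`. -/
def IsNash {α : Type*} [Fintype α] (R C : α → α → ℝ) (x y : α → ℝ) : Prop :=
  IsDist x ∧ IsDist y ∧
    (∀ x', IsDist x' → pay R x' y ≤ pay R x y) ∧
    (∀ y', IsDist y' → pay C x y' ≤ pay C x y)

/-- All entries of `M` lie in `{0, 1}`. -/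
def WinLose {α : Type*} (M : α → α → ℝ) : Prop :=
  ∀ s₁ s₂, M s₁ s₂ = 0 ∨ M s₁ s₂ = 1

/-- The mixed strategy putting probability 1 on the single pure strategy `s`. -/
def pureStrat {α : Type*} [DecidableEq α] (s : α) : α → ℝ :=
  fun t => if t = s then 1 else 0

/-!
If the row player's equilibrium payoff is `0`, no row earns anything against the column player's
mix `y`, so every row is a best response to each column in the support of `y`. It remains to find
a row to which one of these columns is a best response. If the column player wins at some `(s, t)`
with `t` in the support of `y`, then `s` is such a row. Otherwise her equilibrium payoff is also
`0`, so no column earns anything against `x`, and any row in the support of `x` will do.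
-/

section Averages

variable {α : Type*} [Fintype α] {x f : α → ℝ}

theorem IsDist.exists_ne_zero (hx : IsDist x) : ∃ s, x s ≠ 0 := by
  obtain ⟨s, -, hs⟩ := exists_ne_zero_of_sum_ne_zero (hx.2.trans_ne one_ne_zero)
  exact ⟨s, hs⟩

theorem IsDist.sum_mul_le (hx : IsDist x) {c : ℝ} (hf : ∀ s, f s ≤ c) :
    ∑ s, x s * f s ≤ c :=
  calc
    ∑ s, x s * f s ≤ ∑ s, x s * c :=
      sum_le_sum fun s _ => mul_le_mul_of_nonneg_left (hf s) (hx.1 s)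
    _ = c := by rw [← sum_mul, hx.2, one_mul]

theorem eq_zero_of_sum_mul_nonpos (hx : ∀ s, 0 ≤ x s) (hf : ∀ s, 0 ≤ f s)
    (h : ∑ s, x s * f s ≤ 0) {s : α} (hs : x s ≠ 0) : f s = 0 := by
  have hterm : ∀ s ∈ univ, 0 ≤ x s * f s := fun s _ => mul_nonneg (hx s) (hf s)
  have hsum : ∑ s, x s * f s = 0 := h.antisymm (sum_nonneg hterm)
  have hmul : x s * f s = 0 := (sum_eq_zero_iff_of_nonneg hterm).1 hsum s (mem_univ s)
  exact (mul_eq_zero.1 hmul).resolve_left hs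

end Averages

section WinLose

variable {α : Type*} {M : α → α → ℝ}

theorem WinLose.nonneg (hM : WinLose M) (s t : α) : 0 ≤ M s t := by
  rcases hM s t with h | h <;> simp [h]

theorem WinLose.le_one (hM : WinLose M) (s t : α) : M s t ≤ 1 := by
  rcases hM s t with h | h <;> simp [h]

end WinLose

section Payoffs

variable {α : Type*} [Fintype α]

theorem pay_swap (M : α → α → ℝ) (x y : α → ℝ) : pay (Function.swap M) y x = pay M x y := by
  simp only [pay, Function.swap, mul_comm (y _)]
  exact sum_comm

theorem pay_eq_zero_of_forall {M : α → α → ℝ} {y : α → ℝ} (x : α → ℝ)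
    (h : ∀ s t, y t ≠ 0 → M s t = 0) : pay M x y = 0 := by
  refine sum_eq_zero fun s _ => sum_eq_zero fun t _ => ?_
  by_cases ht : y t = 0
  · rw [ht, mul_zero, zero_mul]
  · rw [h s t ht, mul_zero]

variable [DecidableEq α]

theorem isDist_pureStrat (s : α) : IsDist (pureStrat s) :=
  ⟨fun t => by unfold pureStrat; positivity, by simp [pureStrat]⟩

theorem pay_pureStrat_right (M : α → α → ℝ) (x : α → ℝ) (t : α) :
    pay M x (pureStrat t) = ∑ s, x s * M s t := by
  simp [pay, pureStrat]

theorem pay_pureStrat_left (M : α → α → ℝ) (y : α → ℝ) (s : α) :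
    pay M (pureStrat s) y = ∑ t, y t * M s t := by
  simp [pay, pureStrat]

theorem pay_pureStrat_pureStrat (M : α → α → ℝ) (s t : α) :
    pay M (pureStrat s) (pureStrat t) = M s t := by
  simp [pay, pureStrat]

end Payoffs

section Equilibria

variable {α : Type*} [Fintype α] {R C : α → α → ℝ} {x y : α → ℝ}

theorem IsNash.swap (h : IsNash R C x y) : IsNash (Function.swap C) (Function.swap R) y x := by
  obtain ⟨hx, hy, hrow, hcol⟩ := h
  exact ⟨hy, hx, by simpa only [pay_swap] using hcol, by simpa only [pay_swap] using hrow⟩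

theorem IsNash.row_eq_zero (h : IsNash R C x y) (hR : ∀ s t, 0 ≤ R s t) (h0 : pay R x y = 0)
    (s : α) {t : α} (ht : y t ≠ 0) : R s t = 0 := by
  classical
  obtain ⟨-, hy, hrow, -⟩ := h
  have hdev : ∑ t, y t * R s t ≤ 0 := by
    rw [← pay_pureStrat_left, ← h0]
    exact hrow _ (isDist_pureStrat s)
  exact eq_zero_of_sum_mul_nonpos hy.1 (hR s) hdev ht

theorem IsNash.col_eq_zero (h : IsNash R C x y) (hC : ∀ s t, 0 ≤ C s t) (h0 : pay C x y = 0)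
    {s : α} (hs : x s ≠ 0) (t : α) : C s t = 0 :=
  h.swap.row_eq_zero (fun t s => hC s t) ((pay_swap C x y).trans h0) t hs

variable [DecidableEq α]

theorem isNash_pureStrat {s t : α} (hrow : ∀ s', R s' t ≤ R s t) (hcol : ∀ t', C s t' ≤ C s t) :
    IsNash R C (pureStrat s) (pureStrat t) := by
  refine ⟨isDist_pureStrat s, isDist_pureStrat t, fun x' hx' => ?_, fun y' hy' => ?_⟩
  · rw [pay_pureStrat_pureStrat, pay_pureStrat_right]
    exact hx'.sum_mul_le hrow
  · rw [pay_pureStrat_pureStrat, pay_pureStrat_left]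
    exact hy'.sum_mul_le hcol

theorem IsNash.exists_pureStrat_of_row_pay_eq_zero (h : IsNash R C x y)
    (hR : ∀ s t, 0 ≤ R s t) (hC : WinLose C) (h0 : pay R x y = 0) :
    ∃ s t : α, IsNash R C (pureStrat s) (pureStrat t) := by
  have hrow (s : α) {t : α} (ht : y t ≠ 0) : ∀ s', R s' t ≤ R s t := fun s' => by
    rw [h.row_eq_zero hR h0 s' ht, h.row_eq_zero hR h0 s ht]
  by_cases hwin : ∃ s t, y t ≠ 0 ∧ C s t = 1
  · obtain ⟨s, t, ht, hst⟩ := hwin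
    exact ⟨s, t, isNash_pureStrat (hrow s ht) fun t' => hst ▸ hC.le_one s t'⟩
  · push Not at hwin
    have hC0 : pay C x y = 0 :=
      pay_eq_zero_of_forall x fun s t ht => (hC s t).resolve_right (hwin s t ht)
    obtain ⟨s, hs⟩ := h.1.exists_ne_zero
    obtain ⟨t, ht⟩ := h.2.1.exists_ne_zero
    refine ⟨s, t, isNash_pureStrat (hrow s ht) fun t' => ?_⟩
    rw [h.col_eq_zero hC.nonneg hC0 hs t', h.col_eq_zero hC.nonneg hC0 hs t]

theorem winlose_zero_utility_implies_pure_nash_general (hR : ∀ s t, 0 ≤ R s t)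
    (hC : ∀ s t, 0 ≤ C s t) (hNE : IsNash R C x y)
    (h0 : (pay R x y = 0 ∧ WinLose C) ∨ (pay C x y = 0 ∧ WinLose R)) :
    ∃ s₁ s₂ : α, IsNash R C (pureStrat s₁) (pureStrat s₂) := by
  rcases h0 with ⟨hR0, hCwl⟩ | ⟨hC0, hRwl⟩
  · exact hNE.exists_pureStrat_of_row_pay_eq_zero hR hCwl hR0
  · obtain ⟨t, s, hst⟩ := hNE.swap.exists_pureStrat_of_row_pay_eq_zero
      (fun t s => hC s t) (fun t s => hRwl s t) ((pay_swap C x y).trans hC0)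
    exact ⟨s, t, hst.swap⟩

end Equilibria

/-- If a win-lose bimatrix game has a Nash equilibrium in which some player gets
expected utility `0`, then it has a pure Nash equilibrium. -/
theorem winlose_zero_utility_implies_pure_nash {n : ℕ}
    (R C : Fin n → Fin n → ℝ) (hR : WinLose R) (hC : WinLose C)
    (x y : Fin n → ℝ) (hNE : IsNash R C x y)
    (h0 : pay R x y = 0 ∨ pay C x y = 0) :
    ∃ s₁ s₂ : Fin n, IsNash R C (pureStrat s₁) (pureStrat s₂) :=
  winlose_zero_utility_implies_pure_nash_general hR.nonneg hC.nonneg hNE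
    (h0.imp (⟨·, hC⟩) (⟨·, hR⟩))
end

section
/- For every integer h ≥ 1, the cyclic game Ĝ₁[h] has exactly one Nash equilibrium σ; this Nash equilibrium is fully mixed and uniform (each player plays the uniform distribution on all h strategies) and satisfies U_1(σ) = U_2(σ) = 1/h. Moreover, for h = 1 this Nash equilibrium is Pareto-Optimal and Strongly Pareto-Optimal. -/
open Finset

/-- The Nash equilibrium `⟨x, y⟩` is Pareto-Optimal. -/
def ParetoOpt {α : Type*} [Fintype α] (R C : α → α → ℝ) (x y : α → ℝ) : Prop :=
  ¬ ∃ x' y', IsDist x' ∧ IsDist y' ∧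
    (pay R x y < pay R x' y' ∨ pay C x y < pay C x' y') ∧
    pay R x y ≤ pay R x' y' ∧ pay C x y ≤ pay C x' y'

/-- The Nash equilibrium `⟨x, y⟩` is Strongly Pareto-Optimal. -/
def StrongParetoOpt {α : Type*} [Fintype α] (R C : α → α → ℝ) (x y : α → ℝ) : Prop :=
  ∀ x' y', IsDist x' → IsDist y' →
    (pay R x y < pay R x' y' ∨ pay C x y < pay C x' y') →
    ((x' ≠ x ∧ pay R x' y' ≤ pay R x y) ∨ (y' ≠ y ∧ pay C x' y' ≤ pay C x y))

/-- Utility matrix of the row player in the cyclic game `Ĝ₁[h]`: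
she wins exactly when the two players concur. -/
def cycR (h : ℕ) [NeZero h] : Fin h → Fin h → ℝ :=
  fun s₁ s₂ => if s₂ = s₁ then 1 else 0

/-- Utility matrix of the column player in the cyclic game `Ĝ₁[h]`:
she wins exactly when she follows the row player in the cyclic order. -/
def cycC (h : ℕ) [NeZero h] : Fin h → Fin h → ℝ :=
  fun s₁ s₂ => if s₂ = s₁ + 1 then 1 else 0

/-- The fully mixed uniform strategy on `Fin h`. -/
noncomputable def unif (h : ℕ) : Fin h → ℝ := fun _ => 1 / (h : ℝ)

/-!
A Nash equilibrium equalises each player's payoffs over the other's support. When the row player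
wins exactly at `t = σ s`, a row `s` in the support of `x` is a best response, so `y (σ s)` is the
row player's positive value: `σ` carries the support of `x` into that of `y`. Symmetrically, if the
column player wins exactly at `t = τ s`, then `τ⁻¹` carries the support of `y` back into that of
`x`. So the support of `x` is stable under `τ⁻¹ * σ`, and if this permutation has a single orbit
then `x` is fully mixed. Full support forces `y ∘ σ` to be constant, and then `x ∘ τ⁻¹` as well.
The cyclic game is the case `σ = 1`, `τ s = s + 1`.
-/

open Matrix Equiv

section Distributions

variable {α : Type*} [Fintype α] {x y z : α → ℝ} {s : α}

lemma isDist_single [DecidableEq α] (s : α) : IsDist (Pi.single s 1 : α → ℝ) :=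
  single_mem_stdSimplex ℝ s

lemma IsDist.exists_pos (hx : IsDist x) : ∃ s, 0 < x s := by
  by_contra! hnonpos
  linarith [hx.2, sum_nonpos fun s (_ : s ∈ univ) => hnonpos s]

lemma IsDist.eq_dotProduct_of_le (hx : IsDist x) (hz : ∀ t, z t ≤ x ⬝ᵥ z) (hs : 0 < x s) :
    z s = x ⬝ᵥ z := by
  have hnonneg : ∀ t ∈ univ, 0 ≤ x t * (x ⬝ᵥ z - z t) :=
    fun t _ => mul_nonneg (hx.1 t) (sub_nonneg.mpr (hz t))
  have hsum : ∑ t, x t * (x ⬝ᵥ z - z t) = 0 := by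
    simp only [mul_sub, sum_sub_distrib, ← sum_mul, hx.2, one_mul]
    exact sub_self _
  have hprod := (sum_eq_zero_iff_of_nonneg hnonneg).mp hsum s (mem_univ s)
  exact (sub_eq_zero.mp ((mul_eq_zero.mp hprod).resolve_left hs.ne')).symm

lemma IsDist.eq_of_subsingleton [Subsingleton α] (hx : IsDist x) (hy : IsDist y) : x = y := by
  funext s
  rw [← Fintype.sum_subsingleton x s, ← Fintype.sum_subsingleton y s, hx.2, hy.2]

/-- The uniform distribution on a finite type: the fully mixed uniform strategy `unif` over an
arbitrary strategy set. -/
noncomputable def uniformDist (α : Type*) [Fintype α] : α → ℝ :=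
  fun _ => 1 / (Fintype.card α : ℝ)

lemma uniformDist_pos (s : α) : 0 < uniformDist α s :=
  one_div_pos.mpr (Nat.cast_pos.mpr (Fintype.card_pos_iff.mpr ⟨s⟩))

lemma isDist_uniformDist [Nonempty α] : IsDist (uniformDist α) :=
  ⟨fun s => (uniformDist_pos s).le, by simp [uniformDist]⟩

lemma IsDist.eq_uniformDist_of_const {c : ℝ} (hx : IsDist x) (hc : ∀ s, x s = c) :
    x = uniformDist α := by
  have hcard : (Fintype.card α : ℝ) * c = 1 := by simpa [hc] using hx.2
  funext s
  rw [hc s, uniformDist, eq_one_div_of_mul_eq_one_right hcard]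

end Distributions

section BimatrixGames

variable {α : Type*} [Fintype α] {R C : Matrix α α ℝ} {x y : α → ℝ}

lemma pay_eq_dotProduct_mulVec (M : Matrix α α ℝ) (x y : α → ℝ) :
    pay M x y = x ⬝ᵥ M *ᵥ y := by
  simp only [pay, dotProduct, mulVec, mul_sum]
  exact sum_congr rfl fun _ _ => sum_congr rfl fun _ _ => by ring

lemma pay_transpose (M : Matrix α α ℝ) (x y : α → ℝ) : pay Mᵀ x y = pay M y x := by
  rw [pay_eq_dotProduct_mulVec, pay_eq_dotProduct_mulVec, mulVec_transpose, dotProduct_comm,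
    dotProduct_mulVec]

lemma IsNash.transpose (h : IsNash R C x y) : IsNash Cᵀ Rᵀ y x := by
  obtain ⟨hx, hy, hR, hC⟩ := h
  exact ⟨hy, hx, by simpa only [pay_transpose] using hC, by simpa only [pay_transpose] using hR⟩

lemma IsNash.mulVec_le_pay (h : IsNash R C x y) (s : α) : (R *ᵥ y) s ≤ pay R x y := by
  classical
  simpa only [pay_eq_dotProduct_mulVec, single_one_dotProduct] using h.2.2.1 _ (isDist_single s)

lemma IsNash.mulVec_eq_pay_of_pos {s : α} (h : IsNash R C x y) (hs : 0 < x s) :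
    (R *ᵥ y) s = pay R x y := by
  have hle := h.mulVec_le_pay
  rw [pay_eq_dotProduct_mulVec] at hle ⊢
  exact h.1.eq_dotProduct_of_le hle hs

lemma IsNash.paretoOpt_of_subsingleton [Subsingleton α] (h : IsNash R C x y) :
    ParetoOpt R C x y := by
  rintro ⟨x', y', hx', hy', hlt, -⟩
  simp [hx'.eq_of_subsingleton h.1, hy'.eq_of_subsingleton h.2.1] at hlt

lemma IsNash.strongParetoOpt_of_subsingleton [Subsingleton α] (h : IsNash R C x y) :
    StrongParetoOpt R C x y := by
  intro x' y' hx' hy' hlt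
  simp [hx'.eq_of_subsingleton h.1, hy'.eq_of_subsingleton h.2.1] at hlt

end BimatrixGames

section PermutationGames

variable {α : Type*} [Fintype α] [DecidableEq α] {σ τ : Perm α} {R C : Matrix α α ℝ} {x y : α → ℝ}

lemma pay_permMatrix_uniformDist_right (σ : Perm α) (hx : IsDist x) :
    pay (σ.permMatrix ℝ) x (uniformDist α) = 1 / (Fintype.card α : ℝ) := by
  rw [pay_eq_dotProduct_mulVec, permMatrix_mulVec]
  simp only [dotProduct, Function.comp_apply, uniformDist, ← sum_mul, hx.2, one_mul]

lemma pay_permMatrix_uniformDist_left (σ : Perm α) (hy : IsDist y) :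
    pay (σ.permMatrix ℝ) (uniformDist α) y = 1 / (Fintype.card α : ℝ) := by
  rw [← pay_transpose, transpose_permMatrix, pay_permMatrix_uniformDist_right _ hy]

lemma isNash_permMatrix_uniformDist [Nonempty α] (σ τ : Perm α) :
    IsNash (σ.permMatrix ℝ) (τ.permMatrix ℝ) (uniformDist α) (uniformDist α) := by
  refine ⟨isDist_uniformDist, isDist_uniformDist, fun x hx => ?_, fun y hy => ?_⟩
  · rw [pay_permMatrix_uniformDist_right σ hx,
      pay_permMatrix_uniformDist_right σ isDist_uniformDist]
  · rw [pay_permMatrix_uniformDist_left τ hy, pay_permMatrix_uniformDist_left τ isDist_uniformDist]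

namespace IsNash

lemma apply_perm_eq_pay_of_pos {s : α} (h : IsNash (σ.permMatrix ℝ) C x y) (hs : 0 < x s) :
    y (σ s) = pay (σ.permMatrix ℝ) x y := by
  simpa only [permMatrix_mulVec, Function.comp_apply] using h.mulVec_eq_pay_of_pos hs

lemma pay_permMatrix_pos (h : IsNash (σ.permMatrix ℝ) C x y) : 0 < pay (σ.permMatrix ℝ) x y := by
  obtain ⟨t, ht⟩ := h.2.1.exists_pos
  have hle : y t ≤ pay (σ.permMatrix ℝ) x y := by
    simpa [permMatrix_mulVec] using h.mulVec_le_pay (σ⁻¹ t)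
  exact ht.trans_le hle

lemma apply_perm_pos {s : α} (h : IsNash (σ.permMatrix ℝ) C x y) (hs : 0 < x s) :
    0 < y (σ s) :=
  (h.apply_perm_eq_pay_of_pos hs).symm ▸ h.pay_permMatrix_pos

lemma eq_uniformDist_right_of_forall_pos (h : IsNash (σ.permMatrix ℝ) C x y)
    (hx : ∀ s, 0 < x s) : y = uniformDist α := by
  refine h.2.1.eq_uniformDist_of_const (c := pay (σ.permMatrix ℝ) x y) fun t => ?_
  simpa using h.apply_perm_eq_pay_of_pos (hx (σ⁻¹ t))

lemma swap_permMatrix (h : IsNash R (τ.permMatrix ℝ) x y) :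
    IsNash (τ⁻¹.permMatrix ℝ) Rᵀ y x := by
  simpa only [transpose_permMatrix] using h.transpose

lemma forall_pos_of_sameCycle (hcycle : ∀ a b, (τ⁻¹ * σ).SameCycle a b)
    (h : IsNash (σ.permMatrix ℝ) (τ.permMatrix ℝ) x y) (s : α) : 0 < x s := by
  have hstable : Set.MapsTo (τ⁻¹ * σ) {a | 0 < x a} {a | 0 < x a} :=
    fun _ ha => h.swap_permMatrix.apply_perm_pos (h.apply_perm_pos ha)
  obtain ⟨r, hr⟩ := h.1.exists_pos
  obtain ⟨n, rfl⟩ := (hcycle r s).exists_nat_pow_eq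
  rw [← Perm.iterate_eq_pow]
  exact hstable.iterate n hr

lemma eq_uniformDist_of_sameCycle (hcycle : ∀ a b, (τ⁻¹ * σ).SameCycle a b)
    (h : IsNash (σ.permMatrix ℝ) (τ.permMatrix ℝ) x y) :
    x = uniformDist α ∧ y = uniformDist α := by
  have hy : y = uniformDist α :=
    h.eq_uniformDist_right_of_forall_pos (h.forall_pos_of_sameCycle hcycle)
  exact ⟨h.swap_permMatrix.eq_uniformDist_right_of_forall_pos fun t => hy ▸ uniformDist_pos t, hy⟩

end IsNash

end PermutationGames

section CyclicGame

variable (h : ℕ)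

lemma unif_eq_uniformDist : unif h = uniformDist (Fin h) := by
  ext
  simp only [unif, uniformDist, Fintype.card_fin]

variable [NeZero h]

lemma cycR_eq_permMatrix : cycR h = (1 : Perm (Fin h)).permMatrix ℝ := by
  ext s t
  simp [cycR, eq_comm]

lemma cycC_eq_permMatrix : cycC h = (Equiv.addRight (1 : Fin h)).permMatrix ℝ := by
  ext s t
  simp [cycC, PEquiv.toMatrix_apply, eq_comm]

open Fin.CommRing in
lemma sameCycle_addRight_one (a b : Fin h) : (Equiv.addRight (1 : Fin h)).SameCycle a b :=
  ⟨(b - a).val, by simp⟩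

end CyclicGame

theorem cyclic_game_unique_nash_general {α : Type*} [Fintype α] [DecidableEq α] [Nonempty α]
    {σ τ : Perm α} (hcycle : ∀ a b, (τ⁻¹ * σ).SameCycle a b) :
    IsNash (σ.permMatrix ℝ) (τ.permMatrix ℝ) (uniformDist α) (uniformDist α) ∧
    (∀ x y : α → ℝ, IsNash (σ.permMatrix ℝ) (τ.permMatrix ℝ) x y →
      x = uniformDist α ∧ y = uniformDist α) ∧
    (∀ s : α, 0 < uniformDist α s) ∧
    (∀ s t : α, uniformDist α s = uniformDist α t) ∧
    pay (σ.permMatrix ℝ) (uniformDist α) (uniformDist α) = 1 / (Fintype.card α : ℝ) ∧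
    pay (τ.permMatrix ℝ) (uniformDist α) (uniformDist α) = 1 / (Fintype.card α : ℝ) ∧
    (Fintype.card α = 1 →
      ParetoOpt (σ.permMatrix ℝ) (τ.permMatrix ℝ) (uniformDist α) (uniformDist α) ∧
      StrongParetoOpt (σ.permMatrix ℝ) (τ.permMatrix ℝ) (uniformDist α) (uniformDist α)) := by
  have hnash := isNash_permMatrix_uniformDist σ τ
  refine ⟨hnash, fun x y h => h.eq_uniformDist_of_sameCycle hcycle, uniformDist_pos,
    fun _ _ => rfl, pay_permMatrix_uniformDist_right σ isDist_uniformDist,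
    pay_permMatrix_uniformDist_right τ isDist_uniformDist, fun hcard => ?_⟩
  have : Subsingleton α := Fintype.card_le_one_iff_subsingleton.mp hcard.le
  exact ⟨hnash.paretoOpt_of_subsingleton, hnash.strongParetoOpt_of_subsingleton⟩

/-- For every `h ≥ 1`, the cyclic game `Ĝ₁[h]` has a single Nash equilibrium, which is
fully mixed and uniform, where both players have expected utility `1/h`; and for `h = 1`
this Nash equilibrium is Pareto-Optimal and Strongly Pareto-Optimal. -/
theorem cyclic_game_unique_nash (h : ℕ) [NeZero h] :
    IsNash (cycR h) (cycC h) (unif h) (unif h) ∧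
    (∀ x y : Fin h → ℝ, IsNash (cycR h) (cycC h) x y → x = unif h ∧ y = unif h) ∧
    (∀ s : Fin h, 0 < unif h s) ∧
    (∀ s t : Fin h, unif h s = unif h t) ∧
    pay (cycR h) (unif h) (unif h) = 1 / (h : ℝ) ∧
    pay (cycC h) (unif h) (unif h) = 1 / (h : ℝ) ∧
    (h = 1 → ParetoOpt (cycR h) (cycC h) (unif h) (unif h) ∧
      StrongParetoOpt (cycR h) (cycC h) (unif h) (unif h)) := by
  simpa only [unif_eq_uniformDist, cycR_eq_permMatrix, cycC_eq_permMatrix, Fintype.card_fin] using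
    cyclic_game_unique_nash_general (σ := 1) (τ := Equiv.addRight (1 : Fin h)) fun a b => by
      simpa only [mul_one, Perm.sameCycle_inv] using sameCycle_addRight_one h a b
end

section
/- In every Nash equilibrium σ of the win-lose bimatrix game Ĝ₃, both players have support of size at least 2: |Supp(σ_1)| ≥ 2 and |Supp(σ_2)| ≥ 2. -/
open Finset

/-- Utility matrix of the row player in the game `Ĝ₃`. -/
noncomputable def G3R : Fin 4 → Fin 4 → ℝ :=
  ![![0, 0, 1, 1], ![0, 1, 1, 0], ![0, 1, 0, 1], ![1, 0, 0, 0]]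

/-- Utility matrix of the column player in the game `Ĝ₃`. -/
noncomputable def G3C : Fin 4 → Fin 4 → ℝ :=
  ![![1, 1, 0, 0], ![1, 0, 0, 1], ![1, 0, 1, 0], ![0, 1, 1, 1]]

/-!
Every cell of `Ĝ₃` is won by exactly one player, and every pure strategy has a reply that wins
against it. The latter gives each player a positive expected utility in equilibrium. If the row
player played a pure strategy, the column player would win with certainty by a pure reply, so at
equilibrium the row player's expected utility would vanish, a contradiction. Transposing the game
exchanges the players.
-/

section

variable {α : Type*} [Fintype α]

namespace IsDist

variable {x : α → ℝ}

theorem exists_pos_s5 (hx : IsDist x) : ∃ s, 0 < x s := by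
  obtain ⟨s, -, hs⟩ := exists_lt_of_sum_lt (s := univ) (f := 0) (g := x) (by simp [hx.2])
  exact ⟨s, hs⟩

variable [DecidableEq α]

theorem single (s : α) : IsDist (Pi.single s 1) :=
  single_mem_stdSimplex ℝ s

theorem exists_eq_single_of_ncard_lt_two (hx : IsDist x) (hcard : {s | 0 < x s}.ncard < 2) :
    ∃ s, x = Pi.single s 1 := by
  obtain ⟨s, hs⟩ := hx.exists_pos_s5
  have hzero : ∀ t ≠ s, x t = 0 := fun t hts ↦ by
    by_contra hne
    have ht : 0 < x t := (hx.1 t).lt_of_ne' hne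
    exact hts ((Set.ncard_le_one (Set.toFinite _)).1 (Nat.le_of_lt_succ hcard) t ht s hs)
  have hone : x s = 1 := by
    rw [← hx.2, Fintype.sum_eq_single s hzero]
  refine ⟨s, funext fun t ↦ ?_⟩
  obtain rfl | hts := eq_or_ne t s
  · rw [hone, Pi.single_eq_same]
  · rw [hzero t hts, Pi.single_eq_of_ne hts]

end IsDist

theorem pay_flip (M : α → α → ℝ) (x y : α → ℝ) : pay (flip M) y x = pay M x y := by
  simp only [pay, flip]
  rw [sum_comm]
  simp only [mul_comm (y _)]

theorem pay_add (M N : α → α → ℝ) (x y : α → ℝ) : pay (M + N) x y = pay M x y + pay N x y := by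
  simp only [pay, Pi.add_apply, mul_add, sum_add_distrib]

theorem pay_const {x y : α → ℝ} (hx : IsDist x) (hy : IsDist y) (c : ℝ) :
    pay (fun _ _ ↦ c) x y = c := by
  simp only [pay, ← sum_mul, ← mul_sum, hx.2, hy.2, one_mul]

theorem pay_mono {M N : α → α → ℝ} {x y : α → ℝ} (hx : ∀ s, 0 ≤ x s) (hy : ∀ t, 0 ≤ y t)
    (hMN : ∀ s t, M s t ≤ N s t) : pay M x y ≤ pay N x y :=
  sum_le_sum fun s _ ↦ sum_le_sum fun t _ ↦
    mul_le_mul_of_nonneg_left (hMN s t) (mul_nonneg (hx s) (hy t))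

theorem pay_single_left [DecidableEq α] (M : α → α → ℝ) (s : α) (y : α → ℝ) :
    pay M (Pi.single s 1) y = ∑ t, y t * M s t := by
  rw [pay, Fintype.sum_eq_single s fun u hu ↦ by simp [hu]]
  simp

theorem pay_single_single [DecidableEq α] (M : α → α → ℝ) (s t : α) :
    pay M (Pi.single s 1) (Pi.single t 1) = M s t := by
  simp [pay_single_left, Pi.single_apply]

namespace IsNash

variable {R C : α → α → ℝ} {x y : α → ℝ} {c : ℝ}

theorem transpose_s5 (h : IsNash R C x y) : IsNash (flip C) (flip R) y x := by
  obtain ⟨hx, hy, hR, hC⟩ := h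
  simp only [IsNash, pay_flip]
  exact ⟨hy, hx, hC, hR⟩

theorem pay_left_pos (h : IsNash R C x y) (hR : ∀ s t, 0 ≤ R s t)
    (hreply : ∀ t, ∃ s, 0 < R s t) : 0 < pay R x y := by
  classical
  obtain ⟨-, hy, hbest, -⟩ := h
  obtain ⟨t, ht⟩ := hy.exists_pos_s5
  obtain ⟨s, hs⟩ := hreply t
  calc
    0 < y t * R s t := mul_pos ht hs
    _ ≤ ∑ t', y t' * R s t' :=
      single_le_sum (fun t' _ ↦ mul_nonneg (hy.1 t') (hR s t')) (mem_univ t)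
    _ = pay R (Pi.single s 1) y := (pay_single_left R s y).symm
    _ ≤ pay R x y := hbest _ (.single s)

theorem pay_add_pay_le (h : IsNash R C x y) (hsum : ∀ s t, R s t + C s t ≤ c) :
    pay R x y + pay C x y ≤ c := by
  obtain ⟨hx, hy, -⟩ := h
  calc
    pay R x y + pay C x y = pay (R + C) x y := (pay_add R C x y).symm
    _ ≤ pay (fun _ _ ↦ c) x y := pay_mono hx.1 hy.1 hsum
    _ = c := pay_const hx hy c

theorem two_le_ncard_support_left (h : IsNash R C x y) (hR : ∀ s t, 0 ≤ R s t)
    (hsum : ∀ s t, R s t + C s t ≤ c) (hrow : ∀ t, ∃ s, 0 < R s t)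
    (hcol : ∀ s, ∃ t, c ≤ C s t) : 2 ≤ {s | 0 < x s}.ncard := by
  classical
  by_contra! hcard
  obtain ⟨s, rfl⟩ := h.1.exists_eq_single_of_ncard_lt_two hcard
  obtain ⟨t, ht⟩ := hcol s
  have hC : c ≤ pay C (Pi.single s 1) y := calc
    c ≤ C s t := ht
    _ = pay C (Pi.single s 1) (Pi.single t 1) := (pay_single_single C s t).symm
    _ ≤ pay C (Pi.single s 1) y := h.2.2.2 _ (.single t)
  linarith [h.pay_left_pos hR hrow, h.pay_add_pay_le hsum]

end IsNash

theorem G3_supports_at_least_two_general {R C : α → α → ℝ} {x y : α → ℝ} {c : ℝ}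
    (h : IsNash R C x y) (hc : 0 < c) (hR : ∀ s t, 0 ≤ R s t) (hC : ∀ s t, 0 ≤ C s t)
    (hsum : ∀ s t, R s t + C s t ≤ c) (hrow : ∀ t, ∃ s, c ≤ R s t) (hcol : ∀ s, ∃ t, c ≤ C s t) :
    2 ≤ {s | 0 < x s}.ncard ∧ 2 ≤ {s | 0 < y s}.ncard := by
  constructor
  · have hpos : ∀ t, ∃ s, 0 < R s t := fun t ↦ (hrow t).imp fun _ ↦ hc.trans_le
    exact h.two_le_ncard_support_left hR hsum hpos hcol
  · have hpos : ∀ s, ∃ t, 0 < C s t := fun s ↦ (hcol s).imp fun _ ↦ hc.trans_le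
    have hsum' : ∀ t s, C s t + R s t ≤ c := fun t s ↦ (add_comm _ _).trans_le (hsum s t)
    exact h.transpose_s5.two_le_ncard_support_left (fun t s ↦ hC s t) hsum' hpos hrow

end

theorem G3R_nonneg (s t : Fin 4) : 0 ≤ G3R s t := by
  fin_cases s <;> fin_cases t <;> simp [G3R]

theorem G3C_nonneg (s t : Fin 4) : 0 ≤ G3C s t := by
  fin_cases s <;> fin_cases t <;> simp [G3C]

theorem G3R_add_G3C (s t : Fin 4) : G3R s t + G3C s t = 1 := by
  fin_cases s <;> fin_cases t <;> simp [G3R, G3C]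

theorem exists_G3R_eq_one (t : Fin 4) : ∃ s, G3R s t = 1 :=
  ⟨![3, 1, 0, 0] t, by fin_cases t <;> simp [G3R]⟩

theorem exists_G3C_eq_one (s : Fin 4) : ∃ t, G3C s t = 1 :=
  ⟨![0, 0, 0, 1] s, by fin_cases s <;> simp [G3C]⟩

/-- In every Nash equilibrium of the win-lose bimatrix game `Ĝ₃`, both players have
support of size at least 2. -/
theorem G3_supports_at_least_two (x y : Fin 4 → ℝ) (hNE : IsNash G3R G3C x y) :
    2 ≤ {s | 0 < x s}.ncard ∧ 2 ≤ {s | 0 < y s}.ncard := by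
  exact G3_supports_at_least_two_general hNE one_pos G3R_nonneg G3C_nonneg
    (fun s t ↦ (G3R_add_G3C s t).le) (fun t ↦ (exists_G3R_eq_one t).imp fun _ ↦ Eq.ge)
    (fun s ↦ (exists_G3C_eq_one s).imp fun _ ↦ Eq.ge)
end
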